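/- arXiv:1110.6187 — 2 statements merged into one kernel-verified Lean document; each statement's English description precedes it below -/
import Mathlib

section
/- Let H be an infinite-dimensional real Hilbert space. Then there exist a sequence {X_n} of nonempty closed bounded convex subsets of H and a nonempty closed bounded convex set X ⊆ H such that X_n Fisher-converges to X but h(X_n, X) does not tend to 0. Concretely, if {e_n} is a sequence in the unit sphere of H with ‖e_n − e_m‖ ≥ r for all n ≠ m and some 0 < r < 1, then X_n = conv{e₁, …, e_n} Fisher-converges to X = closed convex hull of {e_n : n ∈ ℕ}, while h(X_n, X) does not converge to 0. -/
open Metric Filter Topology Pointwise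

variable {H : Type*} [NormedAddCommGroup H] [InnerProductSpace ℝ H] [CompleteSpace H]

/-- The excess `e(A,B) = sup_{a ∈ A} d(a, B)`. -/
noncomputable def excess (A B : Set H) : ℝ := sSup ((fun a => infDist a B) '' A)

/-- The Pompeiu–Hausdorff distance `h(A,B) = max (e(A,B)) (e(B,A))`. -/
noncomputable def hdist (A B : Set H) : ℝ := max (excess A B) (excess B A)

/-- Fisher convergence: `e(Xₙ, L) → 0` and `d(z, Xₙ) → 0` for every `z ∈ L`. -/
def FisherConv (X : ℕ → Set H) (L : Set H) : Prop :=
  Tendsto (fun n => excess (X n) L) atTop (𝓝 0) ∧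
    ∀ z ∈ L, Tendsto (fun n => infDist z (X n)) atTop (𝓝 0)

/-!
Each `Xₙ` is compact and `⋃ n, Xₙ` is dense in `X`. An increasing sequence always Fisher-converges
to the closure of its union, since only a pointwise approximation of the limit is asked for.
Convergence in the Pompeiu–Hausdorff distance is uniform, so it would make the bounded set `X`
totally bounded, like the `Xₙ`; this fails because `X` contains an infinite `r`-separated set.
-/

section TotallyBounded

variable {α : Type*} [PseudoMetricSpace α]

theorem totallyBounded_of_forall_exists_subset_thickening {s : Set α}
    (h : ∀ ε > 0, ∃ t, TotallyBounded t ∧ s ⊆ thickening ε t) : TotallyBounded s := by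
  refine totallyBounded_iff.2 fun ε hε => ?_
  obtain ⟨t, ht, hst⟩ := h (ε / 2) (half_pos hε)
  obtain ⟨N, hN, htN⟩ := totallyBounded_iff.1 ht (ε / 2) (half_pos hε)
  refine ⟨N, hN, ?_⟩
  rw [← thickening_eq_biUnion_ball] at htN ⊢
  calc
    s ⊆ thickening (ε / 2) (thickening (ε / 2) N) :=
      hst.trans (thickening_subset_of_subset _ htN)
    _ ⊆ thickening (ε / 2 + ε / 2) N := thickening_thickening_subset _ _ _
    _ = thickening ε N := by rw [add_halves]

theorem not_totallyBounded_range_of_pairwise_le_dist {ι : Type*} [Infinite ι] {u : ι → α} {r : ℝ}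
    (hr : 0 < r) (hu : Pairwise fun i j => r ≤ dist (u i) (u j)) :
    ¬ TotallyBounded (Set.range u) := by
  intro h
  obtain ⟨N, hN, hcover⟩ := totallyBounded_iff.1 h (r / 2) (half_pos hr)
  have hnear : ∀ i, ∃ c : N, dist (u i) c < r / 2 := fun i => by
    simpa using hcover (Set.mem_range_self i)
  choose c hc using hnear
  have : Finite N := hN
  obtain ⟨i, j, hij, hcij⟩ := Finite.exists_ne_map_eq_of_infinite c
  have hj : dist (u j) (c i) < r / 2 := hcij ▸ hc j
  linarith [hu hij, hc i, dist_triangle_right (u i) (u j) (c i)]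

end TotallyBounded

section ConvexHull

variable {𝕜 V : Type*} [Semiring 𝕜] [PartialOrder 𝕜] [AddCommMonoid V] [Module 𝕜 V]

theorem convexHull_iUnion_of_directed {ι : Sort*} {s : ι → Set V} (hs : Directed (· ⊆ ·) s) :
    convexHull 𝕜 (⋃ i, s i) = ⋃ i, convexHull 𝕜 (s i) := by
  refine subset_antisymm (convexHull_min ?_ ?_) ?_
  · exact Set.iUnion_mono fun i => subset_convexHull 𝕜 (s i)
  · have hdir : Directed (· ⊆ ·) fun i => convexHull 𝕜 (s i) :=
      hs.mono_comp (g := convexHull 𝕜) _ fun _ _ h => convexHull_mono h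
    exact hdir.convex_iUnion fun i => convex_convexHull 𝕜 (s i)
  · exact Set.iUnion_subset fun i => convexHull_mono (Set.subset_iUnion s i)

theorem nonempty_convexHull_image_Iic {ι : Type*} [Preorder ι] (e : ι → V) (i : ι) :
    (convexHull 𝕜 (e '' Set.Iic i)).Nonempty :=
  (Set.nonempty_Iic.image e).convexHull

theorem monotone_convexHull_image_Iic {ι : Type*} [Preorder ι] (e : ι → V) :
    Monotone fun i => convexHull 𝕜 (e '' Set.Iic i) :=
  fun _ _ hij => convexHull_mono (Set.image_mono (Set.Iic_subset_Iic.2 hij))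

theorem convexHull_range_eq_iUnion_image_Iic {ι : Type*} [Preorder ι] [IsDirectedOrder ι]
    (e : ι → V) :
    convexHull 𝕜 (Set.range e) = ⋃ i, convexHull 𝕜 (e '' Set.Iic i) := by
  have hmono : Monotone fun i => e '' Set.Iic i := fun _ _ hij =>
    Set.image_mono (Set.Iic_subset_Iic.2 hij)
  rw [← convexHull_iUnion_of_directed hmono.directed_le, ← Set.image_iUnion, Set.iUnion_Iic,
    Set.image_univ]

theorem isCompact_convexHull_image_Iic {W ι : Type*} [AddCommGroup W] [Module ℝ W]
    [TopologicalSpace W] [IsTopologicalAddGroup W] [ContinuousSMul ℝ W] [Preorder ι]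
    [LocallyFiniteOrderBot ι] (e : ι → W) (i : ι) : IsCompact (convexHull ℝ (e '' Set.Iic i)) :=
  ((Set.finite_Iic i).image e).isCompact_convexHull ℝ

end ConvexHull

section Excess

variable {E : Type*} [NormedAddCommGroup E]

theorem excess_eq_zero_of_subset {A B : Set E} (h : A ⊆ B) : excess A B = 0 := by
  have hzero : ∀ x ∈ (fun a => infDist a B) '' A, x = 0 :=
    Set.forall_mem_image.2 fun a ha => infDist_zero_of_mem (h ha)
  exact le_antisymm (Real.sSup_nonpos fun x hx => (hzero x hx).le)
    (Real.sSup_nonneg fun x hx => (hzero x hx).ge)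

theorem infDist_le_excess {A B : Set E} (hA : Bornology.IsBounded A) {a : E} (ha : a ∈ A) :
    infDist a B ≤ excess A B :=
  le_csSup ((lipschitz_infDist_pt B).isBounded_image hA).bddAbove (Set.mem_image_of_mem _ ha)

theorem subset_thickening_of_hdist_lt {A B : Set E} (hA : A.Nonempty) (hB : Bornology.IsBounded B)
    {ε : ℝ} (h : hdist A B < ε) : B ⊆ thickening ε A := fun _ hb =>
  (mem_thickening_iff_infDist_lt hA).2 <|
    (infDist_le_excess hB hb).trans_lt ((le_max_right _ _).trans_lt h)

theorem fisherConv_closure_iUnion {X : ℕ → Set E} (hX : Monotone X) :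
    FisherConv X (closure (⋃ n, X n)) := by
  constructor
  · have hexcess : ∀ n, excess (X n) (closure (⋃ n, X n)) = 0 := fun n =>
      excess_eq_zero_of_subset ((Set.subset_iUnion X n).trans subset_closure)
    simp only [hexcess, tendsto_const_nhds]
  · intro z hz
    refine Metric.tendsto_atTop.2 fun ε hε => ?_
    obtain ⟨w, hw, hzw⟩ := Metric.mem_closure_iff.1 hz ε hε
    obtain ⟨N, hwN⟩ := Set.mem_iUnion.1 hw
    refine ⟨N, fun n hn => ?_⟩
    rw [Real.dist_0_eq_abs, abs_of_nonneg infDist_nonneg]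
    exact (infDist_le_dist_of_mem (hX hn hwN)).trans_lt hzw

theorem totallyBounded_of_tendsto_hdist {ι : Type*} {l : Filter ι} [l.NeBot] {X : ι → Set E}
    {L : Set E} (hne : ∀ i, (X i).Nonempty) (hX : ∀ i, TotallyBounded (X i))
    (hL : Bornology.IsBounded L) (h : Tendsto (fun i => hdist (X i) L) l (𝓝 0)) :
    TotallyBounded L := by
  refine totallyBounded_of_forall_exists_subset_thickening fun ε hε => ?_
  obtain ⟨i, hi⟩ := (h.eventually_lt_const hε).exists
  exact ⟨X i, hX i, subset_thickening_of_hdist_lt (hne i) hL hi⟩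

end Excess

section ConvexHullSequence

variable {E : Type*} [NormedAddCommGroup E] [NormedSpace ℝ E]

theorem fisherConv_convexHull_image_Iic (e : ℕ → E) :
    FisherConv (fun n => convexHull ℝ (e '' Set.Iic n))
      (closure (convexHull ℝ (Set.range e))) := by
  rw [convexHull_range_eq_iUnion_image_Iic]
  exact fisherConv_closure_iUnion (monotone_convexHull_image_Iic e)

theorem not_tendsto_hdist_convexHull_image_Iic {ι : Type*} [Preorder ι] [LocallyFiniteOrderBot ι]
    {l : Filter ι} [l.NeBot] {e : ι → E}
    (hb : Bornology.IsBounded (Set.range e)) (he : ¬ TotallyBounded (Set.range e)) :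
    ¬ Tendsto
        (fun i => hdist (convexHull ℝ (e '' Set.Iic i)) (closure (convexHull ℝ (Set.range e))))
        l (𝓝 0) := fun h =>
  he <| (totallyBounded_of_tendsto_hdist (nonempty_convexHull_image_Iic e)
    (fun i => (isCompact_convexHull_image_Iic e i).totallyBounded)
    (isBounded_convexHull.2 hb).closure h).subset
      ((subset_convexHull ℝ _).trans subset_closure)

theorem fisher_not_hausdorff_general :
    (¬ FiniteDimensional ℝ E → ∃ (X : ℕ → Set E) (L : Set E),
      (∀ n, (X n).Nonempty ∧ IsClosed (X n) ∧ Bornology.IsBounded (X n) ∧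
        Convex ℝ (X n)) ∧
      (L.Nonempty ∧ IsClosed L ∧ Bornology.IsBounded L ∧ Convex ℝ L) ∧
      FisherConv X L ∧
      ¬ Tendsto (fun n => hdist (X n) L) atTop (𝓝 0)) ∧
    ∀ e : ℕ → E, Bornology.IsBounded (Set.range e) → ¬ TotallyBounded (Set.range e) →
      FisherConv (fun n => convexHull ℝ (e '' Set.Iic n))
          (closure (convexHull ℝ (Set.range e))) ∧
        ¬ Tendsto
            (fun n => hdist (convexHull ℝ (e '' Set.Iic n))
              (closure (convexHull ℝ (Set.range e))))
            atTop (𝓝 0) := by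
  refine ⟨fun hE => ?_, fun e hb he =>
    ⟨fisherConv_convexHull_image_Iic e, not_tendsto_hdist_convexHull_image_Iic hb he⟩⟩
  obtain ⟨R, e, -, heR, hsep⟩ := exists_seq_norm_le_one_le_norm_sub hE
  have hb : Bornology.IsBounded (Set.range e) :=
    isBounded_iff_forall_norm_le.2 ⟨R, Set.forall_mem_range.2 heR⟩
  have he : ¬ TotallyBounded (Set.range e) :=
    not_totallyBounded_range_of_pairwise_le_dist one_pos (by simpa only [dist_eq_norm] using hsep)
  refine ⟨fun n => convexHull ℝ (e '' Set.Iic n), closure (convexHull ℝ (Set.range e)),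
    fun n => ⟨nonempty_convexHull_image_Iic e n, (isCompact_convexHull_image_Iic e n).isClosed,
      (isCompact_convexHull_image_Iic e n).isBounded, convex_convexHull ℝ _⟩,
    ⟨(Set.range_nonempty e).convexHull.closure, isClosed_closure,
      (isBounded_convexHull.2 hb).closure, (convex_convexHull ℝ _).closure⟩,
    fisherConv_convexHull_image_Iic e, not_tendsto_hdist_convexHull_image_Iic hb he⟩

end ConvexHullSequence

/-- Example 1: in an infinite-dimensional real Hilbert space there is a sequence of
nonempty closed bounded convex sets Fisher-converging to a nonempty closed bounded
convex set without converging in the Pompeiu–Hausdorff metric.  Concretely, for any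
`r`-separated sequence `{eₙ}` in the unit sphere (`0 < r < 1`), the sets
`Xₙ = conv{e₀, …, eₙ}` Fisher-converge to the closed convex hull of `{eₙ}` while
`h(Xₙ, X)` does not tend to `0`. -/
theorem fisher_not_hausdorff (hH : ¬ FiniteDimensional ℝ H) :
    (∃ (X : ℕ → Set H) (L : Set H),
      (∀ n, (X n).Nonempty ∧ IsClosed (X n) ∧ Bornology.IsBounded (X n) ∧
        Convex ℝ (X n)) ∧
      (L.Nonempty ∧ IsClosed L ∧ Bornology.IsBounded L ∧ Convex ℝ L) ∧
      FisherConv X L ∧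
      ¬ Tendsto (fun n => hdist (X n) L) atTop (𝓝 0)) ∧
    ∀ (e : ℕ → H) (r : ℝ), 0 < r → r < 1 →
      (∀ n, ‖e n‖ = 1) → (∀ n m, n ≠ m → r ≤ ‖e n - e m‖) →
      FisherConv (fun n => convexHull ℝ (e '' Set.Iic n))
          (closure (convexHull ℝ (Set.range e))) ∧
        ¬ Tendsto
            (fun n => hdist (convexHull ℝ (e '' Set.Iic n))
              (closure (convexHull ℝ (Set.range e))))
            atTop (𝓝 0) := by
  refine ⟨fisher_not_hausdorff_general.1 hH, fun e r hr _ hnorm hsep => ?_⟩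
  exact fisher_not_hausdorff_general.2 e
    (isBounded_iff_forall_norm_le.2 ⟨1, Set.forall_mem_range.2 fun n => (hnorm n).le⟩)
    (not_totallyBounded_range_of_pairwise_le_dist hr fun n m hnm =>
      (hsep n m hnm).trans_eq (dist_eq_norm _ _).symm)
end

section
/- Let H be an infinite-dimensional real Hilbert space with closed unit ball B̄. Then there exists a sequence {X_n} of nonempty closed bounded convex subsets of H such that X_n Wijsman-converges to B̄ but does not Fisher-converge to B̄. Concretely, if {e_n} is a sequence in the unit sphere of H with ‖e_n − e_m‖ ≥ r for all n ≠ m for some 0 < r < 1, and 1 < λ < 2/√(4 − r²), then the sets X_n = closed convex hull of ({λ e_n} ∪ B̄) satisfy: d(z, X_n) → d(z, B̄) for every z ∈ H, while e(X_n, B̄) = λ − 1 > 0 for every n, so e(X_n, B̄) does not tend to 0. -/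
open Metric Filter Topology Pointwise

variable {H : Type*} [NormedAddCommGroup H] [InnerProductSpace ℝ H] [CompleteSpace H]

/-!
The spike `a` of `co̅({a} ∪ B̄)` affects the distance from `z` only if it leaves the half-space
`{f ≤ 1}`, where `f` is a functional of norm at most `1` with `f z = ‖z‖`: inside it, the hull is
no closer to `z` than the ball is. If the spikes `aₙ` satisfy `‖aₘ + aₙ‖ ≤ 2` for `m ≠ n`, then
`f aₘ > 1` and `f aₙ > 1` cannot both hold, so each half-space excludes at most one spike and the
distance to `z` is eventually constant. For `aₙ = λ eₙ` the parallelogram law bounds `‖aₘ + aₙ‖`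
by `λ √(4 - r²)`. The excess only sees the height `‖aₙ‖ - 1 = λ - 1` of the spike.
-/

/-- Wijsman convergence of a sequence of sets: pointwise convergence of the distance functions. -/
def WijsmanConv {α : Type*} [PseudoMetricSpace α] (X : ℕ → Set α) (L : Set α) : Prop :=
  ∀ z, Tendsto (fun n => infDist z (X n)) atTop (𝓝 (infDist z L))

section SeminormedSpace

variable {E : Type*} [SeminormedAddCommGroup E] [NormedSpace ℝ E]

lemma infDist_closedBall (x c : E) {r : ℝ} (hr : 0 ≤ r) :
    infDist x (closedBall c r) = max (dist x c - r) 0 := by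
  rw [infDist, ← cthickening_singleton c hr, infEDist_cthickening, infEDist_singleton,
    edist_dist, ← ENNReal.ofReal_sub _ hr, ENNReal.toReal_ofReal']

lemma sub_le_infDist_of_forall_le {f : StrongDual ℝ E} (hf : ‖f‖ ≤ 1) {s : Set E}
    (hs : s.Nonempty) {t : ℝ} (hst : ∀ y ∈ s, f y ≤ t) (x : E) : f x - t ≤ infDist x s := by
  refine (le_infDist hs).2 fun y hy => ?_
  calc f x - t ≤ f (x - y) := by rw [map_sub]; linarith [hst y hy]
    _ ≤ ‖f (x - y)‖ := Real.le_norm_self _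
    _ ≤ 1 * ‖x - y‖ := f.le_of_opNorm_le hf _
    _ = dist x y := by rw [one_mul, dist_eq_norm]

/-- The cap body with apex `a`: the closed convex hull of `a` and the closed unit ball. It is
spelled as the closure of a convex hull rather than through `closedConvexHull`. -/
def capBody (a : E) : Set E :=
  closure (convexHull ℝ ({a} ∪ closedBall 0 1))

lemma mem_capBody_self (a : E) : a ∈ capBody a :=
  subset_closure (subset_convexHull ℝ _ (.inl rfl))

lemma closedBall_subset_capBody (a : E) : closedBall 0 1 ⊆ capBody a :=
  Set.subset_union_right.trans ((subset_convexHull ℝ _).trans subset_closure)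

lemma capBody_nonempty (a : E) : (capBody a).Nonempty :=
  ⟨a, mem_capBody_self a⟩

lemma isClosed_capBody (a : E) : IsClosed (capBody a) :=
  isClosed_closure

lemma convex_capBody (a : E) : Convex ℝ (capBody a) :=
  (convex_convexHull ℝ _).closure

lemma capBody_subset {a : E} {s : Set E} (hs : IsClosed s) (hconv : Convex ℝ s) (ha : a ∈ s)
    (hball : closedBall 0 1 ⊆ s) : capBody a ⊆ s :=
  closure_minimal
    (convexHull_min (Set.union_subset (Set.singleton_subset_iff.2 ha) hball) hconv) hs

lemma capBody_subset_closedBall {a : E} {R : ℝ} (hR : 1 ≤ R) (ha : ‖a‖ ≤ R) :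
    capBody a ⊆ closedBall 0 R :=
  capBody_subset isClosed_closedBall (convex_closedBall _ _) (mem_closedBall_zero_iff.2 ha)
    (closedBall_subset_closedBall hR)

lemma isBounded_capBody (a : E) : Bornology.IsBounded (capBody a) :=
  isBounded_closedBall.subset
    (capBody_subset_closedBall (le_max_left 1 ‖a‖) (le_max_right 1 ‖a‖))

lemma apply_le_one_of_mem_capBody {f : StrongDual ℝ E} (hf : ‖f‖ ≤ 1) {a y : E} (ha : f a ≤ 1)
    (hy : y ∈ capBody a) : f y ≤ 1 := by
  have hball : closedBall 0 1 ⊆ {x | f x ≤ 1} := fun x hx =>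
    (Real.le_norm_self _).trans (f.unit_le_opNorm x (mem_closedBall_zero_iff.1 hx) |>.trans hf)
  exact capBody_subset (isClosed_le f.continuous continuous_const)
    (convex_halfSpace_le f.toLinearMap.isLinear 1) ha hball hy

lemma infDist_capBody_eq_infDist_closedBall {f : StrongDual ℝ E} (hf : ‖f‖ ≤ 1) {a z : E}
    (hz : f z = ‖z‖) (ha : f a ≤ 1) : infDist z (capBody a) = infDist z (closedBall 0 1) := by
  refine le_antisymm (infDist_le_infDist_of_subset (closedBall_subset_capBody a)
    (nonempty_closedBall.2 zero_le_one)) ?_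
  rw [infDist_closedBall z 0 zero_le_one, dist_zero_right, ← hz]
  exact max_le (sub_le_infDist_of_forall_le hf (capBody_nonempty a)
    (fun _ => apply_le_one_of_mem_capBody hf ha) z) infDist_nonneg

lemma eventually_apply_le_one {a : ℕ → E} (ha : Pairwise fun m n => ‖a m + a n‖ ≤ 2)
    {f : StrongDual ℝ E} (hf : ‖f‖ ≤ 1) : ∀ᶠ n in atTop, f (a n) ≤ 1 := by
  have hsub : {n | ¬ f (a n) ≤ 1}.Subsingleton := by
    intro m hm n hn
    by_contra hmn
    have hsum : f (a m) + f (a n) ≤ 2 :=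
      calc f (a m) + f (a n) = f (a m + a n) := (map_add f _ _).symm
        _ ≤ ‖f (a m + a n)‖ := Real.le_norm_self _
        _ ≤ 1 * ‖a m + a n‖ := f.le_of_opNorm_le hf _
        _ ≤ 2 := by rw [one_mul]; exact ha hmn
    linarith [not_le.1 hm, not_le.1 hn]
  rw [← Nat.cofinite_eq_atTop]
  exact hsub.finite

lemma wijsmanConv_capBody {a : ℕ → E} (ha : Pairwise fun m n => ‖a m + a n‖ ≤ 2) :
    WijsmanConv (fun n => capBody (a n)) (closedBall 0 1) := by
  intro z
  obtain ⟨f, hf, hz⟩ := exists_dual_vector'' ℝ z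
  refine tendsto_const_nhds.congr' ?_
  filter_upwards [eventually_apply_le_one ha hf] with n hn
  exact (infDist_capBody_eq_infDist_closedBall hf hz hn).symm

end SeminormedSpace

lemma excess_capBody {E : Type*} [NormedAddCommGroup E] [NormedSpace ℝ E] {a : E}
    (ha : 1 ≤ ‖a‖) : excess (capBody a) (closedBall 0 1) = ‖a‖ - 1 := by
  have hdist (x : E) : infDist x (closedBall 0 1) = max (‖x‖ - 1) 0 := by
    rw [infDist_closedBall x 0 zero_le_one, dist_zero_right]
  refine IsGreatest.csSup_eq ⟨⟨a, mem_capBody_self a, ?_⟩, ?_⟩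
  · exact (hdist a).trans (max_eq_left (sub_nonneg.2 ha))
  · rintro _ ⟨x, hx, rfl⟩
    have hxa : ‖x‖ ≤ ‖a‖ := mem_closedBall_zero_iff.1 (capBody_subset_closedBall ha le_rfl hx)
    exact (hdist x).trans_le (max_le (sub_le_sub_right hxa 1) (sub_nonneg.2 ha))

lemma norm_add_le_sqrt_of_le_norm_sub {E : Type*} [SeminormedAddCommGroup E]
    [InnerProductSpace ℝ E] {x y : E} {r : ℝ} (hx : ‖x‖ ≤ 1) (hy : ‖y‖ ≤ 1) (hr : 0 ≤ r)
    (hxy : r ≤ ‖x - y‖) : ‖x + y‖ ≤ √(4 - r ^ 2) := by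
  refine Real.le_sqrt_of_sq_le ?_
  have hpar := parallelogram_law_with_norm ℝ x y
  have hx2 : ‖x‖ ^ 2 ≤ 1 := pow_le_one₀ (norm_nonneg x) hx
  have hy2 : ‖y‖ ^ 2 ≤ 1 := pow_le_one₀ (norm_nonneg y) hy
  have hr2 : r ^ 2 ≤ ‖x - y‖ ^ 2 := pow_le_pow_left₀ hr hxy 2
  linarith

section Orthonormal

variable {𝕜 E : Type*} [RCLike 𝕜]

lemma exists_orthonormal_nat [NormedAddCommGroup E] [InnerProductSpace 𝕜 E]
    (hE : ¬ FiniteDimensional 𝕜 E) : ∃ e : ℕ → E, Orthonormal 𝕜 e := by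
  let b := Module.Basis.ofVectorSpace 𝕜 E
  have : Infinite (Module.Basis.ofVectorSpaceIndex 𝕜 E) :=
    not_finite_iff_infinite.1 fun _ => hE (.of_basis b)
  have hb : LinearIndependent 𝕜 (b ∘ Infinite.natEmbedding _) :=
    b.linearIndependent.comp _ (Infinite.natEmbedding _).injective
  exact ⟨_, InnerProductSpace.gramSchmidtNormed_orthonormal hb⟩

lemma norm_sub_eq_sqrt_two_of_orthonormal [SeminormedAddCommGroup E] [InnerProductSpace 𝕜 E]
    {ι : Type*} {e : ι → E} (he : Orthonormal 𝕜 e) {i j : ι} (hij : i ≠ j) :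
    ‖e i - e j‖ = √2 := by
  rw [eq_comm, Real.sqrt_eq_iff_eq_sq zero_le_two (norm_nonneg _), norm_sub_sq (𝕜 := 𝕜),
    he.1, he.1, he.2 hij, map_zero]
  norm_num

end Orthonormal

section InnerProductSpace

variable {E : Type*} [NormedAddCommGroup E] [InnerProductSpace ℝ E]

lemma wijsmanConv_capBody_smul {e : ℕ → E} {r lam : ℝ} (hr : 0 ≤ r) (hlam : 0 ≤ lam)
    (hle : lam * √(4 - r ^ 2) ≤ 2) (he : ∀ n, ‖e n‖ ≤ 1)
    (hsep : Pairwise fun m n => r ≤ ‖e m - e n‖) :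
    WijsmanConv (fun n => capBody (lam • e n)) (closedBall 0 1) := by
  refine wijsmanConv_capBody fun m n hmn => ?_
  calc ‖lam • e m + lam • e n‖ = lam * ‖e m + e n‖ := by
        rw [← smul_add, norm_smul, Real.norm_of_nonneg hlam]
    _ ≤ lam * √(4 - r ^ 2) := by
        gcongr
        exact norm_add_le_sqrt_of_le_norm_sub (he m) (he n) hr (hsep hmn)
    _ ≤ 2 := hle

lemma excess_capBody_smul {x : E} {lam : ℝ} (hlam : 1 ≤ lam) (hx : ‖x‖ = 1) :
    excess (capBody (lam • x)) (closedBall 0 1) = lam - 1 := by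
  have hnorm : ‖lam • x‖ = lam := by
    rw [norm_smul, hx, mul_one, Real.norm_of_nonneg (zero_le_one.trans hlam)]
  rw [excess_capBody (hlam.trans_eq hnorm.symm), hnorm]

lemma not_tendsto_excess_capBody_smul {e : ℕ → E} {lam : ℝ} (hlam : 1 < lam)
    (he : ∀ n, ‖e n‖ = 1) :
    ¬ Tendsto (fun n => excess (capBody (lam • e n)) (closedBall 0 1)) atTop (𝓝 0) := by
  simp only [fun n => excess_capBody_smul hlam.le (he n), tendsto_const_nhds_iff]
  exact (sub_pos.2 hlam).ne'

theorem wijsman_not_fisher_general (hE : ¬ FiniteDimensional ℝ E) :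
    (∃ X : ℕ → Set E,
      (∀ n, (X n).Nonempty ∧ IsClosed (X n) ∧ Bornology.IsBounded (X n) ∧ Convex ℝ (X n)) ∧
      WijsmanConv X (closedBall 0 1) ∧ ¬ FisherConv X (closedBall 0 1)) ∧
    ∀ (e : ℕ → E) (r lam : ℝ), 0 ≤ r → 1 < lam → lam * √(4 - r ^ 2) ≤ 2 →
      (∀ n, ‖e n‖ = 1) → (∀ n m, n ≠ m → r ≤ ‖e n - e m‖) →
      WijsmanConv (fun n => capBody (lam • e n)) (closedBall 0 1) ∧
      (∀ n, excess (capBody (lam • e n)) (closedBall 0 1) = lam - 1) ∧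
      0 < lam - 1 ∧
      ¬ Tendsto (fun n => excess (capBody (lam • e n)) (closedBall 0 1)) atTop (𝓝 0) := by
  constructor
  · obtain ⟨e, he⟩ := exists_orthonormal_nat hE
    have hsep : Pairwise fun m n => √2 ≤ ‖e m - e n‖ := fun _ _ hmn =>
      (norm_sub_eq_sqrt_two_of_orthonormal he hmn).ge
    have hle : √2 * √(4 - √2 ^ 2) ≤ 2 := by
      rw [Real.sq_sqrt zero_le_two, show (4 - 2 : ℝ) = 2 by norm_num,
        Real.mul_self_sqrt zero_le_two]
    exact ⟨fun n => capBody (√2 • e n), fun n => ⟨capBody_nonempty _, isClosed_capBody _,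
        isBounded_capBody _, convex_capBody _⟩,
      wijsmanConv_capBody_smul (Real.sqrt_nonneg 2) (Real.sqrt_nonneg 2) hle
        (fun n => (he.1 n).le) hsep,
      fun h => not_tendsto_excess_capBody_smul Real.one_lt_sqrt_two he.1 h.1⟩
  · intro e r lam hr hlam hle he hsep
    exact ⟨wijsmanConv_capBody_smul hr (by linarith) hle (fun n => (he n).le) hsep,
      fun n => excess_capBody_smul hlam.le (he n), sub_pos.2 hlam,
      not_tendsto_excess_capBody_smul hlam he⟩

end InnerProductSpace

/-- Example 2: in an infinite-dimensional real Hilbert space there is a sequence of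
nonempty closed bounded convex sets Wijsman-converging to the closed unit ball `B̄`
without Fisher-converging to it.  Concretely, for an `r`-separated sequence `{eₙ}` in
the unit sphere (`0 < r < 1`) and `1 < λ < 2/√(4 − r²)`, the sets
`Xₙ = co̅({λeₙ} ∪ B̄)` satisfy `d(z, Xₙ) → d(z, B̄)` for every `z`, while
`e(Xₙ, B̄) = λ − 1 > 0` for every `n`, so `e(Xₙ, B̄)` does not tend to `0`. -/
theorem wijsman_not_fisher (hH : ¬ FiniteDimensional ℝ H) :
    (∃ X : ℕ → Set H,
      (∀ n, (X n).Nonempty ∧ IsClosed (X n) ∧ Bornology.IsBounded (X n) ∧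
        Convex ℝ (X n)) ∧
      (∀ z : H, Tendsto (fun n => infDist z (X n)) atTop
        (𝓝 (infDist z (closedBall (0 : H) 1)))) ∧
      ¬ FisherConv X (closedBall (0 : H) 1)) ∧
    ∀ (e : ℕ → H) (r lam : ℝ), 0 < r → r < 1 →
      1 < lam → lam < 2 / Real.sqrt (4 - r ^ 2) →
      (∀ n, ‖e n‖ = 1) → (∀ n m, n ≠ m → r ≤ ‖e n - e m‖) →
      (∀ z : H, Tendsto
          (fun n => infDist z
            (closure (convexHull ℝ ({lam • e n} ∪ closedBall (0 : H) 1))))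
          atTop (𝓝 (infDist z (closedBall (0 : H) 1)))) ∧
      (∀ n, excess (closure (convexHull ℝ ({lam • e n} ∪ closedBall (0 : H) 1)))
          (closedBall (0 : H) 1) = lam - 1) ∧
      (0 < lam - 1) ∧
      ¬ Tendsto
          (fun n => excess (closure (convexHull ℝ ({lam • e n} ∪ closedBall (0 : H) 1)))
            (closedBall (0 : H) 1))
          atTop (𝓝 0) := by
  refine (wijsman_not_fisher_general hH).imp_right fun h e r lam hr hr1 hlam hlt => ?_
  exact h e r lam hr.le hlam ((lt_div_iff₀ (Real.sqrt_pos.2 (by nlinarith))).1 hlt).le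
end
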